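/- arXiv:1508.05461 — 2 statements merged into one kernel-verified Lean document; each statement's English description precedes it below -/
import Mathlib

section
/- Let A ∈ R^{r×n} be a normal matrix with columns a_1,…,a_n, with a_n nonzero. Then the matrix P_{a_n}A, obtained by orthogonally projecting each column onto the hyperplane orthogonal to a_n, is normal. -/
open Matrix

/-- Nonnegative real cone generated by the columns of `A`. -/
def MCone {ι κ : Type*} [Fintype κ] (A : Matrix ι κ ℝ) : Set (ι → ℝ) :=
  {b | ∃ x : κ → ℝ, (∀ j, 0 ≤ x j) ∧ A.mulVec x = b}

/-- Lattice (integer span) generated by the columns of `A`. -/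
def MZSpan {ι κ : Type*} [Fintype κ] (A : Matrix ι κ ℝ) : Set (ι → ℝ) :=
  {b | ∃ z : κ → ℤ, A.mulVec (fun j => (z j : ℝ)) = b}

/-- Affine semigroup (nonnegative integer span) generated by the columns of `A`. -/
def MNSpan {ι κ : Type*} [Fintype κ] (A : Matrix ι κ ℝ) : Set (ι → ℝ) :=
  {b | ∃ x : κ → ℕ, A.mulVec (fun j => (x j : ℝ)) = b}

/-- `A` is normal if `ℤA ∩ ℝ≥0 A = ℕ A`. -/
def MNormal {ι κ : Type*} [Fintype κ] (A : Matrix ι κ ℝ) : Prop :=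
  MZSpan A ∩ MCone A = MNSpan A

/-- The orthogonal projection matrix onto the hyperplane orthogonal to `v`. -/
noncomputable def projMat {r : ℕ} (v : Fin r → ℝ) : Matrix (Fin r) (Fin r) ℝ :=
  1 - (∑ i, v i * v i)⁻¹ • Matrix.vecMulVec v v

/-- Projecting a normal matrix orthogonally along its last column preserves normality. -/
theorem normal_proj_last_column {r n : ℕ} (A : Matrix (Fin r) (Fin (n + 1)) ℝ)
    (hA : MNormal A) (ha : (fun i => A i (Fin.last n)) ≠ 0) :
    MNormal (projMat (fun i => A i (Fin.last n)) * A) := by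
  set v : Fin r → ℝ := fun i => A i (Fin.last n) with hv
  have hs : (∑ i, v i * v i) ≠ 0 := by
    intro h
    apply ha
    funext i
    have h1 := (Finset.sum_eq_zero_iff_of_nonneg
      (fun i _ => mul_self_nonneg (v i))).1 h i (Finset.mem_univ i)
    exact mul_self_eq_zero.1 h1
  have hP : ∀ w : Fin r → ℝ, (projMat v).mulVec w
      = w - ((∑ i, v i * v i)⁻¹ * (v ⬝ᵥ w)) • v := by
    intro w
    funext i
    simp [projMat, Matrix.sub_mulVec, Matrix.smul_mulVec, Matrix.vecMulVec_mulVec]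
    ring
  have hPv : (projMat v).mulVec v = 0 := by
    have h2 : v ⬝ᵥ v = ∑ i, v i * v i := rfl
    rw [hP, h2, inv_mul_cancel₀ hs, one_smul, sub_self]
  have hAv : ∀ c : ℝ, A.mulVec (Pi.single (Fin.last n) c) = c • v := by
    intro c
    funext i
    simp [hv, mul_comm]
  apply Set.Subset.antisymm
  · rintro b ⟨⟨z, hz⟩, ⟨x, hx0, hx⟩⟩
    rw [← Matrix.mulVec_mulVec] at hz hx
    obtain ⟨c, hc⟩ : ∃ c : ℝ, A.mulVec (fun j => (z j : ℝ)) = A.mulVec x + c • v := by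
      have h := hz.trans hx.symm
      rw [hP, hP, sub_eq_iff_eq_add] at h
      refine ⟨(∑ i, v i * v i)⁻¹ * (v ⬝ᵥ A.mulVec (fun j => (z j : ℝ)))
        - (∑ i, v i * v i)⁻¹ * (v ⬝ᵥ A.mulVec x), ?_⟩
      refine h.trans ?_
      rw [sub_smul]
      abel
    obtain ⟨k, hk⟩ := exists_nat_ge (-c)
    have hmem : A.mulVec (fun j => (z j : ℝ)) + (k : ℝ) • v ∈ MZSpan A ∩ MCone A := by
      constructor
      · refine ⟨z + Pi.single (Fin.last n) (k : ℤ), ?_⟩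
        rw [← hAv, ← Matrix.mulVec_add]
        congr 1
        funext j
        by_cases hj : j = Fin.last n
        · subst hj
          simp
        · simp [hj]
      · refine ⟨x + Pi.single (Fin.last n) (c + k), ?_, ?_⟩
        · intro j
          have := hx0 j
          by_cases hj : j = Fin.last n
          · subst hj
            simp only [Pi.add_apply, Pi.single_eq_same]
            linarith
          · simpa [hj] using this
        · rw [Matrix.mulVec_add, hAv, hc, add_smul, add_assoc]
    rw [hA] at hmem
    obtain ⟨m, hm⟩ := hmem
    refine ⟨m, ?_⟩
    rw [← Matrix.mulVec_mulVec, hm, Matrix.mulVec_add, Matrix.mulVec_smul, hPv, hz]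
    simp
  · rintro b ⟨m, hm⟩
    exact ⟨⟨fun j => (m j : ℤ), by simpa using hm⟩, ⟨fun j => (m j : ℝ), fun j => by positivity, hm⟩⟩
end

section
/- Let n ≥ 3 and let C be the simplicial complex on vertices {0,1,…,n} whose facets are {0,n} and all (n−1)-element subsets of {0,…,n} not containing both 0 and n. Then the binary hierarchical matrix A_C is not normal: the vector b = (1/4)·Σ_i a_i, summing over all columns a_i of A_C, lies in ZA_C ∩ R≥0A_C but not in NA_C. -/
open Matrix

/-- The facets of the complex on vertices `{0,…,N}`: the edge `{0,N}` and all
`(N-1)`-element subsets not containing both `0` and `N`. -/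
def IsFacet (N : ℕ) (F : Finset (Fin (N + 1))) : Prop :=
  F = {0, Fin.last N} ∨ (F.card = N - 1 ∧ ¬(0 ∈ F ∧ Fin.last N ∈ F))

instance (N : ℕ) : DecidablePred (IsFacet N) := fun _ => by unfold IsFacet; infer_instance

/-- Row indices of the binary hierarchical matrix: a facet `F` together with a
binary assignment on `F`. -/
def RowIdx (N : ℕ) : Type :=
  Σ F : {F : Finset (Fin (N + 1)) // IsFacet N F}, ({v : Fin (N + 1) // v ∈ F.1} → Bool)

instance (N : ℕ) : Fintype (RowIdx N) := by unfold RowIdx; infer_instance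

/-- The binary hierarchical matrix `A_C` of this complex: columns are binary
`(N+1)`-tuples, rows are pairs `(F, j)`, and the entry is `1` iff the column restricted
to `F` equals `j`. -/
def hierMat (N : ℕ) : Matrix (RowIdx N) (Fin (N + 1) → Bool) ℝ :=
  Matrix.of fun r c => if ∀ v : {v : Fin (N + 1) // v ∈ r.1.1}, r.2 v = c v.1 then 1 else 0

/-- Sign of a bit. -/
def sgB (b : Bool) : ℝ := if b then -1 else 1

lemma sgB_not (b : Bool) : sgB (!b) = - sgB b := by cases b <;> simp [sgB]

lemma sgB_cases (b : Bool) : sgB b = 1 ∨ sgB b = -1 := by cases b <;> simp [sgB]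

/-- Character of the cube attached to `S`. -/
def chB {n : ℕ} (S : Finset (Fin n)) (c : Fin n → Bool) : ℝ := ∏ v ∈ S, sgB (c v)

lemma chB_cases {n : ℕ} (S : Finset (Fin n)) (c : Fin n → Bool) :
    chB S c = 1 ∨ chB S c = -1 := by
  unfold chB
  induction S using Finset.induction_on with
  | empty => simp
  | insert a S ha ih =>
    rw [Finset.prod_insert ha]
    rcases ih with h | h <;> rcases sgB_cases (c a) with h' | h' <;> simp [h, h']

/-- Flip one bit. -/
def flipB {n : ℕ} (v : Fin n) (c : Fin n → Bool) : Fin n → Bool := Function.update c v (!(c v))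

lemma flipB_invol {n : ℕ} (v : Fin n) : Function.Involutive (flipB v) := by
  intro c
  simp [flipB]

lemma chB_flip {n : ℕ} (S : Finset (Fin n)) (v : Fin n) (hv : v ∈ S) (c : Fin n → Bool) :
    chB S (flipB v c) = - chB S c := by
  unfold chB
  rw [← Finset.mul_prod_erase S _ hv, ← Finset.mul_prod_erase S (fun v => sgB (c v)) hv]
  have : ∏ x ∈ S.erase v, sgB (flipB v c x) = ∏ x ∈ S.erase v, sgB (c x) := by
    apply Finset.prod_congr rfl
    intro x hx
    rw [flipB, Function.update_of_ne (Finset.ne_of_mem_erase hx)]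
  rw [this]
  simp [flipB, sgB_not]

lemma chB_ker {N : ℕ} (S : Finset (Fin (N+1))) (hS : ∀ F, IsFacet N F → ¬ S ⊆ F) :
    (hierMat N).mulVec (chB S) = 0 := by
  funext r
  obtain ⟨v, hvS, hvF⟩ := Finset.not_subset.1 (hS r.1.1 r.1.2)
  have key : ∑ c, hierMat N r c * chB S c = - ∑ c, hierMat N r c * chB S c := by
    conv_lhs => rw [← Equiv.sum_comp (flipB_invol v).toPerm]
    rw [← Finset.sum_neg_distrib]
    apply Finset.sum_congr rfl
    intro c _
    have h1 : hierMat N r (flipB v c) = hierMat N r c := by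
      have : ∀ u : {u : Fin (N + 1) // u ∈ r.1.1}, flipB v c u.1 = c u.1 := by
        intro u
        rw [flipB, Function.update_of_ne]
        rintro h
        exact hvF (h ▸ u.2)
      simp only [hierMat, Matrix.of_apply, this]
    change hierMat N r (flipB v c) * chB S (flipB v c) = _
    rw [h1, chB_flip S v hvS]
    ring
  change ∑ c, hierMat N r c * chB S c = 0
  linarith

lemma hier_row {N : ℕ} (F : Finset (Fin (N+1))) (hF : IsFacet N F) (d : Fin (N+1) → Bool)
    (x : (Fin (N+1) → Bool) → ℝ) :
    (hierMat N).mulVec x ⟨⟨F, hF⟩, fun v => d v.1⟩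
      = ∑ c, if ∀ v ∈ F, d v = c v then x c else 0 := by
  change ∑ c, hierMat N _ c * x c = _
  apply Finset.sum_congr rfl
  intro c _
  have : hierMat N ⟨⟨F, hF⟩, fun v => d v.1⟩ c = if ∀ v ∈ F, d v = c v then 1 else 0 := by
    change (if ∀ v : {v : Fin (N + 1) // v ∈ F}, d v.1 = c v.1 then (1 : ℝ) else 0) = _
    simp only [Subtype.forall]
  rw [this]
  simp

lemma facet_compl {N : ℕ} (a b : Fin (N+1)) (hab : a ≠ b) (ha : a = 0 ∨ a = Fin.last N) :
    IsFacet N ({a, b}ᶜ) := by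
  right
  constructor
  · rw [Finset.card_compl, Finset.card_pair hab, Fintype.card_fin]
    omega
  · simp only [Finset.mem_compl, Finset.mem_insert, Finset.mem_singleton]
    rcases ha with rfl | rfl <;> simp

lemma fiber_sum {N : ℕ} (a b : Fin (N+1)) (hab : a ≠ b) (d : Fin (N+1) → Bool) :
    (∑ c : Fin (N+1) → Bool,
      if ∀ v ∈ ({a, b}ᶜ : Finset (Fin (N+1))), d v = c v then (1/4 : ℝ) else 0) = 1 := by
  rw [← Finset.sum_filter, Finset.sum_const]
  have : (Finset.univ.filter fun c : Fin (N+1) → Bool =>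
      ∀ v ∈ ({a, b}ᶜ : Finset (Fin (N+1))), d v = c v)
      = Fintype.piFinset (fun v => if v ∈ ({a, b} : Finset (Fin (N+1))) then Finset.univ
          else {d v}) := by
    ext c
    simp only [Finset.mem_filter, Finset.mem_univ, true_and, Fintype.mem_piFinset,
      Finset.mem_compl]
    apply forall_congr'
    intro v
    by_cases h : v ∈ ({a, b} : Finset (Fin (N+1)))
    · simp [h]
    · simp only [h, not_false_eq_true, forall_true_left, if_false, Finset.mem_singleton]
      exact eq_comm
  rw [this, Fintype.card_piFinset]
  have h2 : ∀ v, (if v ∈ ({a, b} : Finset (Fin (N+1))) then (Finset.univ : Finset Bool)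
          else {d v}).card = if v ∈ ({a, b} : Finset (Fin (N+1))) then 2 else 1 := by
    intro v
    split_ifs <;> simp
  simp only [h2]
  rw [Finset.prod_ite_mem, Finset.univ_inter, Finset.prod_const, Finset.card_pair hab]
  norm_num

lemma hier_z (N : ℕ) (hN : 3 ≤ N) :
    (hierMat N).mulVec (fun _ => (1 / 4 : ℝ)) ∈ MZSpan (hierMat N) := by
  obtain ⟨p, hp⟩ : ∃ p : Fin (N+1), p.val = 1 := ⟨⟨1, by omega⟩, rfl⟩
  obtain ⟨q, hq⟩ : ∃ q : Fin (N+1), q.val = 2 := ⟨⟨2, by omega⟩, rfl⟩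
  have hp0 : p ≠ 0 := by intro h; simp [h] at hp
  have hq0 : q ≠ 0 := by intro h; simp [h] at hq
  have hpl : p ≠ Fin.last N := by intro h; simp [h] at hp; omega
  have hql : q ≠ Fin.last N := by intro h; simp [h] at hq; omega
  have hpq : p ≠ q := by intro h; rw [h] at hp; omega
  have h0l : (0 : Fin (N+1)) ≠ Fin.last N := by
    intro h; have := congrArg Fin.val h; simp at this; omega
  -- the kernel facts
  have big : ∀ a : Fin (N+1), a = 0 ∨ a = Fin.last N → (hierMat N).mulVec (chB {a}ᶜ) = 0 := by
    intro a ha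
    apply chB_ker
    rintro F (rfl | ⟨hF, -⟩) hs
    · have hpa : p ∈ ({a}ᶜ : Finset (Fin (N+1))) := by
        rcases ha with rfl | rfl <;> simp [hp0, hpl]
      have := hs hpa
      simp [hp0, hpl] at this
    · have := Finset.card_le_card hs
      rw [Finset.card_compl, Fintype.card_fin, Finset.card_singleton] at this
      omega
  have small : ∀ (S : Finset (Fin (N+1))) (u : Fin (N+1)), u ∈ S → u ≠ 0 → u ≠ Fin.last N →
      0 ∈ S → Fin.last N ∈ S → (hierMat N).mulVec (chB S) = 0 := by
    intro S u hu hu0 hul h0 hl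
    apply chB_ker
    rintro F (rfl | ⟨-, hF⟩) hs
    · have := hs hu
      simp [hu0, hul] at this
    · exact hF ⟨hs h0, hs hl⟩
  have k1 := big 0 (Or.inl rfl)
  have k2 := big (Fin.last N) (Or.inr rfl)
  have k3 := small {0, Fin.last N, p} p (by simp) hp0 hpl (by simp) (by simp)
  have k4 := small {0, Fin.last N, q} q (by simp) hq0 hql (by simp) (by simp)
  have k5 := small {0, Fin.last N, p, q} p (by simp) hp0 hpl (by simp) (by simp)
  let w : (Fin (N+1) → Bool) → ℝ := (1/4 : ℝ) • (chB {0}ᶜ + chB {Fin.last N}ᶜ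
    - chB {0, Fin.last N, p} - chB {0, Fin.last N, q} - chB {0, Fin.last N, p, q})
  have hw : (hierMat N).mulVec w = 0 := by
    simp only [w, Matrix.mulVec_smul, Matrix.mulVec_add, Matrix.mulVec_sub, k1, k2, k3, k4, k5]
    simp
  have hz : ∀ c, ∃ z : ℤ, (z : ℝ) = 1/4 + w c := by
    intro c
    have e1 : chB {0}ᶜ c = sgB (c (Fin.last N)) * chB ({0, Fin.last N}ᶜ) c := by
      have : ({0}ᶜ : Finset (Fin (N+1))) = insert (Fin.last N) ({0, Fin.last N}ᶜ) := by
        ext v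
        by_cases h : v = Fin.last N
        · simp [h, h0l.symm]
        · simp [h]
      rw [this]
      exact Finset.prod_insert (by simp)
    have e2 : chB {Fin.last N}ᶜ c = sgB (c 0) * chB ({0, Fin.last N}ᶜ) c := by
      have : ({Fin.last N}ᶜ : Finset (Fin (N+1))) = insert 0 ({0, Fin.last N}ᶜ) := by
        ext v
        by_cases h : v = 0
        · simp [h, h0l]
        · simp [h]
      rw [this]
      exact Finset.prod_insert (by simp)
    have e3 : chB {0, Fin.last N, p} c = sgB (c 0) * (sgB (c (Fin.last N)) * sgB (c p)) := by
      simp [chB, Finset.prod_insert, h0l, hp0.symm, hpl.symm]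
    have e4 : chB {0, Fin.last N, q} c = sgB (c 0) * (sgB (c (Fin.last N)) * sgB (c q)) := by
      simp [chB, Finset.prod_insert, h0l, hq0.symm, hql.symm]
    have e5 : chB {0, Fin.last N, p, q} c
        = sgB (c 0) * (sgB (c (Fin.last N)) * (sgB (c p) * sgB (c q))) := by
      simp [chB, Finset.prod_insert, h0l, hp0.symm, hpl.symm, hq0.symm, hql.symm, hpq]
    have e : w c = 1/4 * (sgB (c (Fin.last N)) * chB ({0, Fin.last N}ᶜ) c
        + sgB (c 0) * chB ({0, Fin.last N}ᶜ) c - sgB (c 0) * (sgB (c (Fin.last N)) * sgB (c p))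
        - sgB (c 0) * (sgB (c (Fin.last N)) * sgB (c q))
        - sgB (c 0) * (sgB (c (Fin.last N)) * (sgB (c p) * sgB (c q)))) := by
      rw [← e1, ← e2, ← e3, ← e4, ← e5]
      simp [w]
    rw [e]
    have i0 : (((0 : ℤ)) : ℝ) = 0 := by simp
    have i1 : (((1 : ℤ)) : ℝ) = 1 := by simp
    have i2 : (((-1 : ℤ)) : ℝ) = -1 := by simp
    have i3 : (((2 : ℤ)) : ℝ) = 2 := by simp
    rcases sgB_cases (c 0) with h1 | h1 <;> rcases sgB_cases (c (Fin.last N)) with h2 | h2 <;>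
    rcases sgB_cases (c p) with h3 | h3 <;> rcases sgB_cases (c q) with h4 | h4 <;>
    rcases chB_cases ({0, Fin.last N}ᶜ) c with h5 | h5 <;> rw [h1, h2, h3, h4, h5] <;>
    first
      | (refine ⟨0, ?_⟩; rw [i0]; norm_num; done)
      | (refine ⟨1, ?_⟩; rw [i1]; norm_num; done)
      | (refine ⟨-1, ?_⟩; rw [i2]; norm_num; done)
      | (refine ⟨2, ?_⟩; rw [i3]; norm_num; done)
  choose z hz using hz
  refine ⟨z, ?_⟩
  have : (fun j => (z j : ℝ)) = (fun _ => (1/4 : ℝ)) + w := by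
    funext c
    simp [hz]
  rw [this, Matrix.mulVec_add, hw, add_zero]

lemma hier_n (N : ℕ) (hN : 3 ≤ N) :
    (hierMat N).mulVec (fun _ => (1 / 4 : ℝ)) ∉ MNSpan (hierMat N) := by
  rintro ⟨x, hx⟩
  have h0l : (0 : Fin (N+1)) ≠ Fin.last N := by
    intro h; have := congrArg Fin.val h; simp at this; omega
  have row : ∀ (F : Finset (Fin (N+1))), IsFacet N F → ∀ d : Fin (N+1) → Bool,
      (∑ c, if ∀ v ∈ F, d v = c v then (x c : ℝ) else 0)
        = ∑ c : Fin (N+1) → Bool, if ∀ v ∈ F, d v = c v then (1/4 : ℝ) else 0 := by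
    intro F hF d
    rw [← hier_row F hF d, ← hier_row F hF d (fun _ => 1/4), hx]
  have row1 : ∀ a b : Fin (N+1), a ≠ b → (a = 0 ∨ a = Fin.last N) → ∀ d : Fin (N+1) → Bool,
      (∑ c, if ∀ v ∈ ({a, b}ᶜ : Finset (Fin (N+1))), d v = c v then (x c : ℝ) else 0) = 1 := by
    intro a b hab ha d
    rw [row _ (facet_compl a b hab ha), fiber_sum a b hab]
  have exi : ∀ (F : Finset (Fin (N+1))), IsFacet N F → ∀ d : Fin (N+1) → Bool,
      ∃ c, x c ≠ 0 ∧ ∀ v ∈ F, d v = c v := by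
    intro F hF d
    by_contra hcon
    push Not at hcon
    have h1 := row F hF d
    rw [Finset.sum_eq_zero] at h1
    · have h2 : (0 : ℝ) < ∑ c : Fin (N+1) → Bool,
          if ∀ v ∈ F, d v = c v then (1/4 : ℝ) else 0 := by
        apply Finset.sum_pos'
        · intro c _
          split_ifs <;> norm_num
        · exact ⟨d, Finset.mem_univ _, by simp⟩
      linarith
    · intro c _
      split_ifs with h
      · by_contra h3
        obtain ⟨v, hv, hne⟩ := hcon c (by exact_mod_cast h3)
        exact hne (h v hv)
      · rfl
  have uni : ∀ a b : Fin (N+1), a ≠ b → (a = 0 ∨ a = Fin.last N) → ∀ c c' : Fin (N+1) → Bool,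
      x c ≠ 0 → x c' ≠ 0 → (∀ v, v ≠ a → v ≠ b → c v = c' v) → c = c' := by
    intro a b hab ha c c' hc hc' hag
    by_contra hne
    have h1 := row1 a b hab ha c
    have h2 : (∑ e ∈ {c, c'}, if ∀ v ∈ ({a, b}ᶜ : Finset (Fin (N+1))), c v = e v
        then (x e : ℝ) else 0) ≤ 1 := by
      rw [← h1]
      apply Finset.sum_le_sum_of_subset_of_nonneg (Finset.subset_univ _)
      intro e _ _
      split_ifs <;> positivity
    rw [Finset.sum_pair hne, if_pos (by simp), if_pos] at h2
    · have h3 : (1 : ℝ) ≤ x c := by exact_mod_cast Nat.one_le_iff_ne_zero.2 hc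
      have h4 : (1 : ℝ) ≤ x c' := by exact_mod_cast Nat.one_le_iff_ne_zero.2 hc'
      linarith
    · intro v hv
      simp only [Finset.mem_compl, Finset.mem_insert, Finset.mem_singleton, not_or] at hv
      exact hag v hv.1 hv.2
  -- flipping a middle vertex
  have step : ∀ (c : Fin (N+1) → Bool) (u : Fin (N+1)), x c ≠ 0 → u ≠ 0 → u ≠ Fin.last N →
      ∃ c', x c' ≠ 0 ∧ c' u = (!(c u)) ∧ (∀ v, v ≠ 0 → v ≠ Fin.last N → v ≠ u → c' v = c v) ∧
        c' 0 = (!(c 0)) ∧ c' (Fin.last N) = (!(c (Fin.last N))) := by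
    intro c u hc hu0 hul
    obtain ⟨c', hc', hag⟩ := exi _ (facet_compl 0 (Fin.last N) h0l (Or.inl rfl)) (flipB u c)
    have hag' : ∀ v, v ≠ 0 → v ≠ Fin.last N → c' v = flipB u c v := by
      intro v h0 hl
      exact (hag v (by simp [h0, hl])).symm
    have hu : c' u = (!(c u)) := by rw [hag' u hu0 hul]; simp [flipB]
    have hne : c' ≠ c := by
      intro h
      rw [h] at hu
      cases hcu : c u <;> simp [hcu] at hu
    have hmid : ∀ v, v ≠ 0 → v ≠ Fin.last N → v ≠ u → c' v = c v := by
      intro v h0 hl hvu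
      rw [hag' v h0 hl, flipB, Function.update_of_ne hvu]
    refine ⟨c', hc', hu, hmid, ?_, ?_⟩
    · by_contra h
      apply hne
      apply uni (Fin.last N) u hul.symm (Or.inr rfl) c' c hc' hc
      intro v hl hvu
      by_cases h0 : v = 0
      · subst h0
        revert h
        cases c' 0 <;> cases c 0 <;> simp
      · exact hmid v h0 hl hvu
    · by_contra h
      apply hne
      apply uni 0 u hu0.symm (Or.inl rfl) c' c hc' hc
      intro v h0 hvu
      by_cases hl : v = Fin.last N
      · subst hl
        revert h
        cases c' (Fin.last N) <;> cases c (Fin.last N) <;> simp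
      · exact hmid v h0 hl hvu
  have conn : ∀ (n : ℕ) (c c' : Fin (N+1) → Bool), x c ≠ 0 → x c' ≠ 0 →
      (Finset.univ.filter fun v => v ≠ 0 ∧ v ≠ Fin.last N ∧ c v ≠ c' v).card = n →
      (c 0 ^^ c (Fin.last N)) = (c' 0 ^^ c' (Fin.last N)) := by
    intro n
    induction n with
    | zero =>
      intro c c' hc hc' hn
      rw [Finset.card_eq_zero, Finset.filter_eq_empty_iff] at hn
      have : c = c' := by
        apply uni 0 (Fin.last N) h0l (Or.inl rfl) c c' hc hc'
        intro v h0 hl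
        by_contra h
        exact hn (Finset.mem_univ v) ⟨h0, hl, h⟩
      rw [this]
    | succ n ih =>
      intro c c' hc hc' hn
      obtain ⟨u, hu⟩ : (Finset.univ.filter fun v =>
          v ≠ 0 ∧ v ≠ Fin.last N ∧ c v ≠ c' v).Nonempty := by
        rw [← Finset.card_pos]; omega
      have hu' := hu
      simp only [Finset.mem_filter, Finset.mem_univ, true_and] at hu'
      obtain ⟨hu0, hul, hucc⟩ := hu'
      obtain ⟨e, he, heu, hmid, he0, hel⟩ := step c u hc hu0 hul
      have := ih e c' he hc' (by
        have h1 : (Finset.univ.filter fun v => v ≠ 0 ∧ v ≠ Fin.last N ∧ e v ≠ c' v)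
            = (Finset.univ.filter fun v => v ≠ 0 ∧ v ≠ Fin.last N ∧ c v ≠ c' v).erase u := by
          ext v
          simp only [Finset.mem_filter, Finset.mem_univ, true_and, Finset.mem_erase]
          by_cases hvu : v = u
          · subst hvu
            have : e v = c' v := by
              rw [heu]
              revert hucc
              cases c v <;> cases c' v <;> simp
            simp [this]
          · constructor
            · rintro ⟨h0, hl, h⟩
              exact ⟨hvu, h0, hl, by rw [← hmid v h0 hl hvu]; exact h⟩
            · rintro ⟨-, h0, hl, h⟩
              exact ⟨h0, hl, by rw [hmid v h0 hl hvu]; exact h⟩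
        rw [h1, Finset.card_erase_of_mem hu, hn]
        rfl)
      rw [← this, he0, hel]
      cases c 0 <;> cases c (Fin.last N) <;> rfl
  obtain ⟨c, hc, hag⟩ := exi {0, Fin.last N} (Or.inl rfl) (fun _ => false)
  obtain ⟨c', hc', hag'⟩ := exi {0, Fin.last N} (Or.inl rfl) (fun v => decide (v = 0))
  have := conn _ c c' hc hc' rfl
  rw [← hag 0 (by simp), ← hag (Fin.last N) (by simp), ← hag' 0 (by simp),
    ← hag' (Fin.last N) (by simp)] at this
  simp [h0l.symm] at this

/-- For `N ≥ 3`, the vector `b = (1/4) Σᵢ aᵢ` (sum over all columns of `A_C`) lies in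
`ℤA_C ∩ ℝ≥0 A_C` but not in `ℕ A_C`; in particular `A_C` is not normal. -/
theorem hierMat_not_normal (N : ℕ) (hN : 3 ≤ N) :
    ((hierMat N).mulVec (fun _ => (1 / 4 : ℝ)) ∈ MZSpan (hierMat N) ∩ MCone (hierMat N) ∧
      (hierMat N).mulVec (fun _ => (1 / 4 : ℝ)) ∉ MNSpan (hierMat N)) ∧
    ¬ MNormal (hierMat N) := by
  have hc : (hierMat N).mulVec (fun _ => (1 / 4 : ℝ)) ∈ MCone (hierMat N) :=
    ⟨_, fun _ => by norm_num, rfl⟩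
  refine ⟨⟨⟨hier_z N hN, hc⟩, hier_n N hN⟩, fun h => hier_n N hN ?_⟩
  have h' : MZSpan (hierMat N) ∩ MCone (hierMat N) = MNSpan (hierMat N) := h
  rw [← h']
  exact ⟨hier_z N hN, hc⟩
end
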